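/- For every m>0 and every 1<β<3 one has Λ_β(m) ≤ (4/π)·(m+1)^{(β+7)/4}·(2+4m+m²)^{(7−β)/4} / (m³·(2+m)^{(13−β)/4}) · ( 2/(3−β) + (√π/2)·Γ((5−β)/4)/Γ((7−β)/4) ), where Γ denotes the Gamma function. In particular, Λ_β(m) is finite for all 0≤β<3 and, for each fixed 0≤β<3, Λ_β(m) → 0 as m → ∞. -/

import Mathlib

open MeasureTheory Real Filter Topology
open scoped InnerProductSpace ENNReal

noncomputable section

/-- Three-dimensional Euclidean space. -/
abbrev R3 := EuclideanSpace ℝ (Fin 3)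

/-- The kernel `G(q₁,…,q_N)` (here with `N` arguments indexed by `Fin N`). -/
def Gker (m μ : ℝ) {N : ℕ} (q : Fin N → R3) : ℝ :=
  (∑ i, ‖q i‖ ^ 2 + (2 / (m + 1)) * ∑ i, ∑ j ∈ Finset.Ioi i, ⟪q i, q j⟫_ℝ + μ)⁻¹

/-- The function `L(q₁,…,q_{N-1})` (here with `N` arguments indexed by `Fin N`). -/
def Lker (m μ : ℝ) {N : ℕ} (q : Fin N → R3) : ℝ :=
  2 * π ^ 2 * Real.sqrt ((m * (m + 2) / (m + 1) ^ 2) * ∑ i, ‖q i‖ ^ 2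
    + (2 * m / (m + 1) ^ 2) * ∑ i, ∑ j ∈ Finset.Ioi i, ⟪q i, q j⟫_ℝ + μ)

/-- `ℓ_m(s,K,Q)`. -/
def ellm (m : ℝ) (s K : R3) (Q : ℝ) : ℝ :=
  Real.sqrt (m / (m + 1) ^ 2 * ‖s + K‖ ^ 2 + m / (m + 1) * (‖s‖ ^ 2 + Q ^ 2))

/-- The quantity `D(s,t,K,Q)`. -/
def Dker (m : ℝ) (s t K : R3) (Q : ℝ) : ℝ :=
  |⟪s + (2 + m)⁻¹ • K, t + (2 + m)⁻¹ • K⟫_ℝ| /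
    ((‖s + (2 + m)⁻¹ • K‖ ^ 2 + ‖t + (2 + m)⁻¹ • K‖ ^ 2
        + m / (1 + m) * (Q ^ 2 + (2 + m)⁻¹ * ‖K‖ ^ 2)) ^ 2
      - ((2 / (1 + m)) * ⟪s + (2 + m)⁻¹ • K, t + (2 + m)⁻¹ • K⟫_ℝ) ^ 2)

/-- `Λ(m)`, as a supremum in the extended nonnegative reals. -/
def Lam (m : ℝ) : ℝ≥0∞ :=
  ⨆ (s : R3) (K : R3) (Q : ℝ) (_ : 0 < Q),
    ENNReal.ofReal ((‖s‖ ^ 2 + Q ^ 2) / (π ^ 2 * (1 + m)) / Real.sqrt (ellm m s K Q)) *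
      ∫⁻ t : R3, ENNReal.ofReal (Dker m s t K Q / (‖t‖ ^ 2 * Real.sqrt (ellm m t K Q)))

/-- `Λ_β(m)`, as a supremum in the extended nonnegative reals. -/
def Lamb (m β : ℝ) : ℝ≥0∞ :=
  ⨆ (s : R3) (K : R3) (Q : ℝ) (_ : 0 < Q),
    ENNReal.ofReal ((‖s‖ ^ 2 + Q ^ 2) / (π ^ 2 * (1 + m))) *
      ∫⁻ t : R3, ENNReal.ofReal ((1 / ‖t‖ ^ 2) *
        (ellm m s K Q ^ ((β - 1) / 2) / ellm m t K Q ^ ((β + 1) / 2)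
          + ellm m t K Q ^ ((β - 1) / 2) / ellm m s K Q ^ ((β + 1) / 2)) * Dker m s t K Q)

/-!
Completing the square in the shifted variables `s + AK` and `t + AK` turns `ℓ_m²` and the bracket
in the denominator of `D` into sums of squares. The bracket then dominates `ℓ_m(s)²`,
`ℓ_m(t)²` and a multiple of `|s|² + Q² + |t|²`, while by Cauchy–Schwarz the denominator of `D` is
at least a multiple of the square of the bracket. For `1 ≤ β < 3` the integrand therefore has a
radial majorant in `t`, whose integral is computed by Beta integrals and scales like
`1 / (|s|² + Q²)`, which cancels the prefactor.

The weight in `Λ_β` is a multiple of `cosh (β (log ℓ_m(s) - log ℓ_m(t)) / 2)`, so `Λ_β` is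
nondecreasing in `|β|`: for smaller `|β|` the claims follow from those for `max |β| 1`.
-/

lemma lintegral_fun_norm_addHaar {E : Type*} [NormedAddCommGroup E] [NormedSpace ℝ E]
    [FiniteDimensional ℝ E] [Nontrivial E] [MeasurableSpace E] [BorelSpace E]
    (μ : Measure E) [μ.IsAddHaarMeasure] {f : ℝ → ℝ≥0∞} (hf : Measurable f) :
    ∫⁻ x, f ‖x‖ ∂μ = Module.finrank ℝ E * μ (Metric.ball 0 1) *
      ∫⁻ r in Set.Ioi (0 : ℝ), ENNReal.ofReal (r ^ (Module.finrank ℝ E - 1)) * f r := by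
  have hf' : Measurable fun r : Set.Ioi (0 : ℝ) => f r := hf.comp measurable_subtype_coe
  calc ∫⁻ x, f ‖x‖ ∂μ
      = ∫⁻ x : ({(0)}ᶜ : Set E), f ‖x.1‖ ∂(μ.comap (↑)) := by
        rw [lintegral_subtype_comap (measurableSet_singleton _).compl fun x => f ‖x‖,
          restrict_compl_singleton]
    _ = ∫⁻ x, f x.2 ∂μ.toSphere.prod (.volumeIoiPow (Module.finrank ℝ E - 1)) := by
        simpa using μ.measurePreserving_homeomorphUnitSphereProd.lintegral_comp
          (hf'.comp measurable_snd)
    _ = μ.toSphere Set.univ *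
          ∫⁻ r : Set.Ioi (0 : ℝ), f r ∂.volumeIoiPow (Module.finrank ℝ E - 1) := by
        rw [lintegral_prod _ (by fun_prop)]
        simp only [lintegral_const, mul_comm]
    _ = _ := by
        rw [μ.toSphere_apply_univ, Measure.volumeIoiPow,
          lintegral_withDensity_eq_lintegral_mul _ (by fun_prop) hf']
        exact congrArg _ (lintegral_subtype_comap measurableSet_Ioi
          fun r => ENNReal.ofReal (r ^ (Module.finrank ℝ E - 1)) * f r)

lemma lintegral_rpow_mul_exp_neg_mul_rpow {p q b : ℝ} (hp : 0 < p) (hq : -1 < q) (hb : 0 < b) :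
    ∫⁻ x in Set.Ioi (0 : ℝ), ENNReal.ofReal (x ^ q * exp (-b * x ^ p))
      = ENNReal.ofReal (b ^ (-(q + 1) / p) * (1 / p) * Gamma ((q + 1) / p)) := by
  rw [← integral_rpow_mul_exp_neg_mul_rpow hp hq hb, ofReal_integral_eq_lintegral_ofReal
    (integrableOn_rpow_mul_exp_neg_mul_rpow hq hp hb)]
  filter_upwards [ae_restrict_mem measurableSet_Ioi] with x hx
  have : 0 < x := hx
  simp only [Pi.zero_apply]
  positivity

lemma ofReal_rpow_neg_eq_lintegral {a B : ℝ} (ha : 0 < a) (hB : 0 < B) :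
    ENNReal.ofReal (B ^ (-a)) = ENNReal.ofReal (Gamma a)⁻¹ *
      ∫⁻ u in Set.Ioi (0 : ℝ), ENNReal.ofReal (u ^ (a - 1) * exp (-B * u)) := by
  have := Gamma_pos_of_pos ha
  have h := lintegral_rpow_mul_exp_neg_mul_rpow one_pos (show -1 < a - 1 by linarith) hB
  simp only [rpow_one, sub_add_cancel, div_one, mul_one] at h
  rw [h, ← ENNReal.ofReal_mul (by positivity)]
  congr 1
  field_simp

lemma lintegral_rpow_mul_rpow_mul_exp_neg_add {a c k q u : ℝ} (hk : 0 < k) (hq : 0 < q)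
    (hu : 0 < u) :
    ∫⁻ r in Set.Ioi (0 : ℝ),
        ENNReal.ofReal (r ^ (q - 1) * (u ^ (a - 1) * exp (-(c + r ^ k) * u)))
      = ENNReal.ofReal (Gamma (q / k) / k) *
          ENNReal.ofReal (u ^ (a - q / k - 1) * exp (-c * u)) := by
  have := Gamma_pos_of_pos (div_pos hq hk)
  have hsplit (r : ℝ) : r ^ (q - 1) * (u ^ (a - 1) * exp (-(c + r ^ k) * u))
      = u ^ (a - 1) * exp (-c * u) * (r ^ (q - 1) * exp (-u * r ^ k)) := by
    rw [show -(c + r ^ k) * u = -c * u + -u * r ^ k by ring, exp_add]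
    ring
  simp only [hsplit, ENNReal.ofReal_mul (show 0 ≤ u ^ (a - 1) * exp (-c * u) by positivity)]
  rw [lintegral_const_mul' _ _ ENNReal.ofReal_ne_top,
    lintegral_rpow_mul_exp_neg_mul_rpow hk (by linarith) hu,
    ← ENNReal.ofReal_mul (by positivity), ← ENNReal.ofReal_mul (by positivity),
    show a - q / k - 1 = a - 1 + -(q - 1 + 1) / k by ring, rpow_add hu, sub_add_cancel]
  congr 1
  ring

-- The substitution `B ^ (-a) = Γ(a)⁻¹ ∫ u ^ (a - 1) e ^ (-B u) du` and Tonelli's theorem.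
lemma lintegral_rpow_mul_add_rpow_rpow_neg {a c k q : ℝ} (hc : 0 < c) (hk : 0 < k) (hq : 0 < q)
    (ha : q / k < a) :
    ∫⁻ r in Set.Ioi (0 : ℝ), ENNReal.ofReal (r ^ (q - 1) * (c + r ^ k) ^ (-a))
      = ENNReal.ofReal (Gamma (q / k) * Gamma (a - q / k) / (k * Gamma a) * c ^ (q / k - a)) := by
  have ha0 : 0 < a := (div_pos hq hk).trans ha
  have := Gamma_pos_of_pos ha0
  have := Gamma_pos_of_pos (div_pos hq hk)
  have hΓaqk := Gamma_pos_of_pos (sub_pos.2 ha)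
  calc ∫⁻ r in Set.Ioi (0 : ℝ), ENNReal.ofReal (r ^ (q - 1) * (c + r ^ k) ^ (-a))
      = ∫⁻ r in Set.Ioi (0 : ℝ), ENNReal.ofReal (Gamma a)⁻¹ * ∫⁻ u in Set.Ioi (0 : ℝ),
          ENNReal.ofReal (r ^ (q - 1) * (u ^ (a - 1) * exp (-(c + r ^ k) * u))) := by
        refine setLIntegral_congr_fun measurableSet_Ioi fun r (hr : 0 < r) => ?_
        simp only [ENNReal.ofReal_mul (show 0 ≤ r ^ (q - 1) by positivity)]
        rw [ofReal_rpow_neg_eq_lintegral ha0 (by positivity),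
          lintegral_const_mul' _ _ ENNReal.ofReal_ne_top, mul_left_comm]
    _ = ENNReal.ofReal (Gamma a)⁻¹ * ∫⁻ u in Set.Ioi (0 : ℝ), ∫⁻ r in Set.Ioi (0 : ℝ),
          ENNReal.ofReal (r ^ (q - 1) * (u ^ (a - 1) * exp (-(c + r ^ k) * u))) := by
        rw [lintegral_const_mul' _ _ ENNReal.ofReal_ne_top,
          lintegral_lintegral_swap (by fun_prop)]
    _ = ENNReal.ofReal (Gamma a)⁻¹ * ∫⁻ u in Set.Ioi (0 : ℝ), ENNReal.ofReal (Gamma (q / k) / k) *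
          ENNReal.ofReal (u ^ (a - q / k - 1) * exp (-c * u)) := by
        congr 1
        exact setLIntegral_congr_fun measurableSet_Ioi fun u hu =>
          lintegral_rpow_mul_rpow_mul_exp_neg_add hk hq hu
    _ = ENNReal.ofReal (Gamma a)⁻¹ * (ENNReal.ofReal (Gamma (q / k) / k) *
          (ENNReal.ofReal (Gamma (a - q / k)) * ENNReal.ofReal (c ^ (-(a - q / k))))) := by
        rw [lintegral_const_mul' _ _ ENNReal.ofReal_ne_top,
          ofReal_rpow_neg_eq_lintegral (sub_pos.2 ha) hc, ← mul_assoc (ENNReal.ofReal (Gamma _)),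
          ← ENNReal.ofReal_mul hΓaqk.le, mul_inv_cancel₀ hΓaqk.ne', ENNReal.ofReal_one, one_mul]
    _ = _ := by
        rw [← ENNReal.ofReal_mul hΓaqk.le, ← ENNReal.ofReal_mul (by positivity),
          ← ENNReal.ofReal_mul (by positivity), neg_sub]
        congr 1
        field_simp

lemma lintegral_norm_rpow_mul_add_norm_rpow_rpow_neg {E : Type*} [NormedAddCommGroup E]
    [NormedSpace ℝ E] [FiniteDimensional ℝ E] [Nontrivial E] [MeasurableSpace E] [BorelSpace E]
    (μ : Measure E) [μ.IsAddHaarMeasure] {a c k q : ℝ} (hc : 0 < c) (hk : 0 < k) (hq : 0 < q)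
    (ha : q / k < a) :
    ∫⁻ x, ENNReal.ofReal (‖x‖ ^ (q - Module.finrank ℝ E) * (c + ‖x‖ ^ k) ^ (-a)) ∂μ
      = Module.finrank ℝ E * μ (Metric.ball 0 1) * ENNReal.ofReal
          (Gamma (q / k) * Gamma (a - q / k) / (k * Gamma a) * c ^ (q / k - a)) := by
  rw [lintegral_fun_norm_addHaar μ
      (f := fun r => ENNReal.ofReal (r ^ (q - Module.finrank ℝ E) * (c + r ^ k) ^ (-a)))
      (by fun_prop), ← lintegral_rpow_mul_add_rpow_rpow_neg hc hk hq ha]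
  congr 1
  refine setLIntegral_congr_fun measurableSet_Ioi fun r (hr : 0 < r) => ?_
  rw [← ENNReal.ofReal_mul (by positivity), ← mul_assoc, ← rpow_natCast r, ← rpow_add hr,
    Nat.cast_pred Module.finrank_pos, sub_add_sub_cancel']

lemma lintegral_norm_rpow_mul_add_sq_rpow_neg {a c q : ℝ} (hc : 0 < c) (hq : 0 < q)
    (ha : q / 2 < a) :
    ∫⁻ t : R3, ENNReal.ofReal (‖t‖ ^ (q - 3) * (c + ‖t‖ ^ 2) ^ (-a))
      = ENNReal.ofReal
          (2 * π * (Gamma (q / 2) * Gamma (a - q / 2) / Gamma a) * c ^ (q / 2 - a)) := by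
  have hdim : Module.finrank ℝ R3 = 3 := finrank_euclideanSpace_fin
  have h := lintegral_norm_rpow_mul_add_norm_rpow_rpow_neg (volume : Measure R3) hc two_pos hq ha
  rw [hdim, EuclideanSpace.volume_ball_fin_three, ENNReal.ofReal_one, one_pow, one_mul] at h
  simp only [rpow_two, Nat.cast_ofNat] at h
  rw [h, ← ENNReal.ofReal_ofNat, ← ENNReal.ofReal_mul (by positivity),
    ← ENNReal.ofReal_mul (by positivity)]
  congr 1
  field_simp
  norm_num

/-- The radial function `t ↦ (w^{-p/2} + |t|^{-p}) (w + |t|²)^{-(3-p)/2}`. With `p = (β-1)/2` and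
`w = |s|² + Q²` it dominates the integrand of `Λ_β(m)` without its factor `|t|^{-2}`, up to a
constant depending on `m` and `β` only. -/
def radialMajorant (p w : ℝ) (t : R3) : ℝ :=
  (w ^ (-(p / 2)) + ‖t‖ ^ (-p)) * (w + ‖t‖ ^ 2) ^ (-((3 - p) / 2))

lemma ofReal_one_div_sq_mul_radialMajorant {p w : ℝ} (hp : -2 < p) (hw : 0 ≤ w) (t : R3) :
    ENNReal.ofReal (1 / ‖t‖ ^ 2 * radialMajorant p w t)
      = ENNReal.ofReal (w ^ (-(p / 2))) *
          ENNReal.ofReal (‖t‖ ^ ((1 : ℝ) - 3) * (w + ‖t‖ ^ 2) ^ (-((3 - p) / 2)))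
        + ENNReal.ofReal (‖t‖ ^ (1 - p - 3) * (w + ‖t‖ ^ 2) ^ (-((3 - p) / 2))) := by
  rw [radialMajorant, ← ENNReal.ofReal_mul (by positivity),
    ← ENNReal.ofReal_add (by positivity) (by positivity)]
  congr 1
  rcases (norm_nonneg t).eq_or_lt with h0 | ht
  · rw [← h0, zero_rpow (show (1 : ℝ) - 3 ≠ 0 by norm_num),
      zero_rpow (show 1 - p - 3 < 0 by linarith).ne]
    ring
  · rw [show (1 : ℝ) - 3 = -2 by norm_num, show 1 - p - 3 = -2 + -p by ring, rpow_add ht,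
      rpow_neg ht.le 2, rpow_two]
    ring

lemma lintegral_radialMajorant {p w : ℝ} (hp0 : -2 < p) (hp : p < 1) (hw : 0 < w) :
    ∫⁻ t : R3, ENNReal.ofReal (1 / ‖t‖ ^ 2 * radialMajorant p w t)
      = ENNReal.ofReal (4 * π * (1 / (1 - p)
          + √π / 2 * Gamma (1 - p / 2) / Gamma ((3 - p) / 2)) / w) := by
  have hp' : 0 < 1 - p := by linarith
  have hΓ : 0 < Gamma ((3 - p) / 2) := Gamma_pos_of_pos (by linarith)
  have hΓ' : 0 < Gamma (1 - p / 2) := Gamma_pos_of_pos (by linarith)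
  have hΓ_succ : Gamma ((3 - p) / 2) = (1 - p) / 2 * Gamma ((1 - p) / 2) := by
    rw [← Gamma_add_one (by positivity)]
    ring_nf
  have hw_add : w ^ (-(p / 2)) * w ^ (1 / 2 - (3 - p) / 2) = w⁻¹ := by
    rw [← rpow_add hw, ← rpow_neg_one]
    ring_nf
  simp only [ofReal_one_div_sq_mul_radialMajorant hp0 hw.le]
  rw [lintegral_add_left (by fun_prop), lintegral_const_mul' _ _ ENNReal.ofReal_ne_top,
    lintegral_norm_rpow_mul_add_sq_rpow_neg hw one_pos (by linarith),
    lintegral_norm_rpow_mul_add_sq_rpow_neg hw hp' (by linarith),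
    show (3 - p) / 2 - 1 / 2 = 1 - p / 2 by ring, show (3 - p) / 2 - (1 - p) / 2 = 1 by ring,
    show (1 - p) / 2 - (3 - p) / 2 = -1 by ring, Gamma_one, Gamma_one_half_eq, rpow_neg_one,
    ← ENNReal.ofReal_mul (by positivity), ← ENNReal.ofReal_add (by positivity) (by positivity)]
  congr 1
  rw [mul_left_comm, hw_add]
  nth_rw 2 [hΓ_succ]
  field_simp
  ring

lemma rpow_le_rpow_half_of_sq_le {x X p : ℝ} (hx : 0 ≤ x) (hp : 0 ≤ p) (h : x ^ 2 ≤ X) :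
    x ^ p ≤ X ^ (p / 2) :=
  calc x ^ p = (x ^ 2) ^ (p / 2) := by
        rw [← rpow_natCast_mul hx, Nat.cast_ofNat, mul_div_cancel₀ _ two_ne_zero]
    _ ≤ X ^ (p / 2) := by gcongr

lemma rpow_neg_le_rpow_neg_half_of_le_sq {x X p : ℝ} (hx : 0 ≤ x) (hp : 0 ≤ p) (hX : 0 < X)
    (h : X ≤ x ^ 2) : x ^ (-p) ≤ X ^ (-(p / 2)) :=
  calc x ^ (-p) = (x ^ 2) ^ (-(p / 2)) := by
        rw [← rpow_natCast_mul hx, Nat.cast_ofNat, mul_neg, mul_div_cancel₀ _ two_ne_zero]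
    _ ≤ X ^ (-(p / 2)) := rpow_le_rpow_of_nonpos hX h (by linarith)

lemma sq_norm_le_mul_sq_norm_add {E : Type*} [SeminormedAddCommGroup E] {e : ℝ} (he : 0 < e)
    (x v : E) : ‖x‖ ^ 2 ≤ (1 + e) * ‖x + v‖ ^ 2 + (1 + e⁻¹) * ‖v‖ ^ 2 :=
  calc ‖x‖ ^ 2 ≤ (‖x + v‖ + ‖v‖) ^ 2 := by
        gcongr
        simpa using norm_sub_le (x + v) v
    _ = ‖x + v‖ ^ 2 + 2 * ‖x + v‖ * ‖v‖ + ‖v‖ ^ 2 := by ring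
    _ ≤ ‖x + v‖ ^ 2 + (e * ‖x + v‖ ^ 2 + e⁻¹ * ‖v‖ ^ 2) + ‖v‖ ^ 2 := by
        gcongr
        exact two_mul_le_add_mul_sq he
    _ = (1 + e) * ‖x + v‖ ^ 2 + (1 + e⁻¹) * ‖v‖ ^ 2 := by ring

/-- The summand `m/(1+m) (Q² + A|K|²)`, with `A = 1/(2+m)`, of the denominator of `D`. It is also
what remains of `ℓ_m(s,K,Q)²` after completing the square in `s`. -/
def residualEnergy (m : ℝ) (K : R3) (Q : ℝ) : ℝ :=
  m / (1 + m) * (Q ^ 2 + (2 + m)⁻¹ * ‖K‖ ^ 2)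

/-- The bracket `|s+AK|² + |t+AK|² + m/(1+m) (Q² + A|K|²)`, with `A = 1/(2+m)`, whose square
appears in the denominator of `D`. -/
def bracketEnergy (m : ℝ) (s t K : R3) (Q : ℝ) : ℝ :=
  ‖s + (2 + m)⁻¹ • K‖ ^ 2 + ‖t + (2 + m)⁻¹ • K‖ ^ 2 + residualEnergy m K Q

lemma residualEnergy_pos {m Q : ℝ} (hm : 0 < m) (hQ : 0 < Q) (K : R3) :
    0 < residualEnergy m K Q := by
  rw [residualEnergy]
  positivity

lemma bracketEnergy_pos {m Q : ℝ} (hm : 0 < m) (hQ : 0 < Q) (s t K : R3) :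
    0 < bracketEnergy m s t K Q :=
  add_pos_of_nonneg_of_pos (by positivity) (residualEnergy_pos hm hQ K)

lemma Dker_comm (m : ℝ) (s t K : R3) (Q : ℝ) : Dker m s t K Q = Dker m t s K Q := by
  rw [Dker, Dker, real_inner_comm, add_comm (‖s + _‖ ^ 2)]

lemma ellm_pos {m Q : ℝ} (hm : 0 < m) (hQ : 0 < Q) (s K : R3) : 0 < ellm m s K Q :=
  Real.sqrt_pos.2 (by positivity)

lemma le_ellm_sq {m : ℝ} (hm : 0 ≤ m) (s K : R3) (Q : ℝ) :
    m / (m + 1) * (‖s‖ ^ 2 + Q ^ 2) ≤ ellm m s K Q ^ 2 := by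
  rw [ellm, Real.sq_sqrt (by positivity)]
  exact le_add_of_nonneg_left (by positivity)

lemma ellm_sq {m : ℝ} (hm : 0 ≤ m) (s K : R3) (Q : ℝ) :
    ellm m s K Q ^ 2
      = m * (m + 2) / (m + 1) ^ 2 * ‖s + (2 + m)⁻¹ • K‖ ^ 2 + residualEnergy m K Q := by
  rw [ellm, residualEnergy, Real.sq_sqrt (by positivity), norm_add_sq_real, norm_add_sq_real,
    inner_smul_right, norm_smul, Real.norm_of_nonneg (by positivity)]
  field_simp
  ring

lemma mul_sq_norm_le_ellm_sq {m Q : ℝ} (hm : 0 < m) (hQ : 0 < Q) (s K : R3) :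
    m * (m + 2) / (m + 1) ^ 2 * ‖s + (2 + m)⁻¹ • K‖ ^ 2 ≤ ellm m s K Q ^ 2 := by
  rw [ellm_sq hm.le]
  exact le_add_of_nonneg_right (residualEnergy_pos hm hQ K).le

lemma ellm_sq_le_bracketEnergy {m : ℝ} (hm : 0 ≤ m) (s t K : R3) (Q : ℝ) :
    ellm m s K Q ^ 2 ≤ bracketEnergy m s t K Q := by
  have hc : m * (m + 2) / (m + 1) ^ 2 ≤ 1 := by
    rw [div_le_one (by positivity)]
    linarith
  rw [ellm_sq hm, bracketEnergy]
  gcongr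
  exact (mul_le_of_le_one_left (sq_nonneg _) hc).trans (le_add_of_nonneg_right (sq_nonneg _))

lemma sq_norm_le_bracketEnergy {m Q : ℝ} (hm : 0 < m) (hQ : 0 < Q) (s t K : R3) :
    ‖s + (2 + m)⁻¹ • K‖ ^ 2 ≤ bracketEnergy m s t K Q := by
  rw [bracketEnergy, add_assoc]
  exact le_add_of_nonneg_right (add_nonneg (sq_nonneg _) (residualEnergy_pos hm hQ K).le)

lemma mul_le_bracketEnergy {m : ℝ} (hm : 0 < m) (s t K : R3) (Q : ℝ) :
    m * (m + 2) / (2 + 4 * m + m ^ 2) * (‖s‖ ^ 2 + Q ^ 2 + ‖t‖ ^ 2)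
      ≤ bracketEnergy m s t K Q := by
  -- With this weight the two `‖K‖ ^ 2` terms add up to the one in `residualEnergy`.
  have he : 0 < 2 * (m + 1) / (m * (m + 2)) := by positivity
  have hs := sq_norm_le_mul_sq_norm_add he s ((2 + m)⁻¹ • K)
  have ht := sq_norm_le_mul_sq_norm_add he t ((2 + m)⁻¹ • K)
  have hK : ‖(2 + m)⁻¹ • K‖ ^ 2 = ((2 + m)⁻¹) ^ 2 * ‖K‖ ^ 2 := by
    rw [norm_smul, Real.norm_of_nonneg (by positivity), mul_pow]
  have hQ : Q ^ 2 ≤ (2 + 4 * m + m ^ 2) / (m * (m + 2)) * (m / (1 + m) * Q ^ 2) := by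
    rw [← mul_assoc, div_mul_div_comm]
    refine le_mul_of_one_le_left (sq_nonneg Q) ((one_le_div (by positivity)).2 ?_)
    nlinarith
  rw [← le_div_iff₀' (by positivity)]
  calc ‖s‖ ^ 2 + Q ^ 2 + ‖t‖ ^ 2 ≤ _ := add_le_add (add_le_add hs hQ) ht
    _ = bracketEnergy m s t K Q / (m * (m + 2) / (2 + 4 * m + m ^ 2)) := by
        rw [bracketEnergy, residualEnergy, hK]
        field_simp
        ring

lemma mul_sq_bracketEnergy_le {m Q : ℝ} (hm : 0 < m) (hQ : 0 < Q) (s t K : R3) :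
    m * (m + 2) / (m + 1) ^ 2 * bracketEnergy m s t K Q ^ 2 ≤ bracketEnergy m s t K Q ^ 2
      - ((2 / (1 + m)) * ⟪s + (2 + m)⁻¹ • K, t + (2 + m)⁻¹ • K⟫_ℝ) ^ 2 := by
  have hinner : |2 * ⟪s + (2 + m)⁻¹ • K, t + (2 + m)⁻¹ • K⟫_ℝ| ≤ bracketEnergy m s t K Q :=
    calc |2 * ⟪s + (2 + m)⁻¹ • K, t + (2 + m)⁻¹ • K⟫_ℝ|
        ≤ 2 * (‖s + (2 + m)⁻¹ • K‖ * ‖t + (2 + m)⁻¹ • K‖) := by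
          rw [abs_mul, abs_two]
          gcongr
          exact abs_real_inner_le_norm _ _
      _ ≤ ‖s + (2 + m)⁻¹ • K‖ ^ 2 + ‖t + (2 + m)⁻¹ • K‖ ^ 2 := by
          rw [← mul_assoc]
          exact two_mul_le_add_sq _ _
      _ ≤ bracketEnergy m s t K Q := le_add_of_nonneg_right (residualEnergy_pos hm hQ K).le
  calc m * (m + 2) / (m + 1) ^ 2 * bracketEnergy m s t K Q ^ 2
      = bracketEnergy m s t K Q ^ 2 - 1 / (1 + m) ^ 2 * bracketEnergy m s t K Q ^ 2 := by
        field_simp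
        ring
    _ ≤ bracketEnergy m s t K Q ^ 2
        - 1 / (1 + m) ^ 2 * (2 * ⟪s + (2 + m)⁻¹ • K, t + (2 + m)⁻¹ • K⟫_ℝ) ^ 2 := by
        gcongr 1
        exact mul_le_mul_of_nonneg_left
          (sq_le_sq.2 (hinner.trans (le_abs_self _))) (by positivity)
    _ = _ := by
        field_simp

lemma Dker_nonneg {m Q : ℝ} (hm : 0 < m) (hQ : 0 < Q) (s t K : R3) : 0 ≤ Dker m s t K Q :=
  div_nonneg (abs_nonneg _) <| le_trans (by positivity) (mul_sq_bracketEnergy_le hm hQ s t K)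

lemma Dker_le {m Q : ℝ} (hm : 0 < m) (hQ : 0 < Q) (s t K : R3) :
    Dker m s t K Q ≤ ‖s + (2 + m)⁻¹ • K‖ * ‖t + (2 + m)⁻¹ • K‖ /
      (m * (m + 2) / (m + 1) ^ 2 * bracketEnergy m s t K Q ^ 2) := by
  have := bracketEnergy_pos hm hQ s t K
  exact div_le_div₀ (by positivity) (abs_real_inner_le_norm _ _) (by positivity)
    (mul_sq_bracketEnergy_le hm hQ s t K)

lemma ellm_rpow_div_rpow_mul_Dker_le {m p Q : ℝ} (hm : 0 < m) (hp : 0 ≤ p) (hQ : 0 < Q)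
    (s t K : R3) :
    ellm m s K Q ^ p / ellm m t K Q ^ (p + 1) * Dker m s t K Q
      ≤ (m * (m + 2) / (m + 1) ^ 2) ^ (-(3 / 2) : ℝ)
        * (ellm m t K Q ^ (-p) * bracketEnergy m s t K Q ^ (-((3 - p) / 2))) := by
  have hX := bracketEnergy_pos hm hQ s t K
  have hs : 0 < ellm m s K Q := ellm_pos hm hQ s K
  have ht : 0 < ellm m t K Q := ellm_pos hm hQ t K
  have hsX := rpow_le_rpow_half_of_sq_le hs.le hp (ellm_sq_le_bracketEnergy hm.le s t K Q)
  have hσX := rpow_le_rpow_half_of_sq_le (norm_nonneg _) zero_le_one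
    (sq_norm_le_bracketEnergy hm hQ s t K)
  have hc : 0 < m * (m + 2) / (m + 1) ^ 2 := by positivity
  have hτ : ‖t + (2 + m)⁻¹ • K‖ ≤ (m * (m + 2) / (m + 1) ^ 2) ^ (-(1 / 2) : ℝ) * ellm m t K Q := by
    rw [rpow_neg hc.le, ← Real.sqrt_eq_rpow, ← div_eq_inv_mul, le_div_iff₀' (Real.sqrt_pos.2 hc)]
    refine le_of_sq_le_sq ?_ ht.le
    rw [mul_pow, Real.sq_sqrt hc.le]
    exact mul_sq_norm_le_ellm_sq hm hQ t K
  have hD := Dker_le hm hQ s t K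
  rw [rpow_one] at hσX
  generalize m * (m + 2) / (m + 1) ^ 2 = c at *
  generalize bracketEnergy m s t K Q = X at *
  have hXpow : X ^ (-((3 - p) / 2)) = X ^ (p / 2) * X ^ (1 / 2 : ℝ) / X ^ 2 := by
    rw [← rpow_add hX, ← rpow_natCast X 2, ← rpow_sub hX]
    push_cast
    ring_nf
  have hcpow : c ^ (-(3 / 2) : ℝ) = c ^ (-(1 / 2) : ℝ) / c := by
    rw [← rpow_sub_one hc.ne']
    norm_num
  calc ellm m s K Q ^ p / ellm m t K Q ^ (p + 1) * Dker m s t K Q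
      ≤ X ^ (p / 2) / ellm m t K Q ^ (p + 1) *
          (X ^ (1 / 2 : ℝ) * (c ^ (-(1 / 2) : ℝ) * ellm m t K Q) / (c * X ^ 2)) := by
        grw [hD, hsX, hσX, hτ]
    _ = c ^ (-(3 / 2) : ℝ) * (ellm m t K Q ^ (-p) * X ^ (-((3 - p) / 2))) := by
        rw [hXpow, hcpow, rpow_add_one ht.ne', rpow_neg ht.le]
        field_simp

/-- The constant in the bound of the integrand of `Λ_β(m)` by `radialMajorant`, where
`p = (β-1)/2`. -/
def kernelConst (m p : ℝ) : ℝ :=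
  (m * (m + 2) / (m + 1) ^ 2) ^ (-(3 / 2) : ℝ) * (m / (m + 1)) ^ (-(p / 2))
    * (m * (m + 2) / (2 + 4 * m + m ^ 2)) ^ (-((3 - p) / 2))

lemma kernelConst_nonneg {m : ℝ} (hm : 0 ≤ m) (p : ℝ) : 0 ≤ kernelConst m p := by
  rw [kernelConst]
  positivity

lemma ellm_rpow_div_rpow_mul_Dker_le_kernelConst_mul {m p u Q : ℝ} (hm : 0 < m) (hp : 0 ≤ p)
    (hp3 : p ≤ 3) (hu : 0 < u) (hQ : 0 < Q) {s t K : R3}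
    (htu : m / (m + 1) * u ≤ ellm m t K Q ^ 2) :
    ellm m s K Q ^ p / ellm m t K Q ^ (p + 1) * Dker m s t K Q ≤
      kernelConst m p * (u ^ (-(p / 2)) * (‖s‖ ^ 2 + Q ^ 2 + ‖t‖ ^ 2) ^ (-((3 - p) / 2))) := by
  have hell : ellm m t K Q ^ (-p) ≤ (m / (m + 1)) ^ (-(p / 2)) * u ^ (-(p / 2)) := by
    rw [← mul_rpow (by positivity) hu.le]
    exact rpow_neg_le_rpow_neg_half_of_le_sq (ellm_pos hm hQ t K).le hp (by positivity) htu
  have hbracket : bracketEnergy m s t K Q ^ (-((3 - p) / 2)) ≤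
      (m * (m + 2) / (2 + 4 * m + m ^ 2)) ^ (-((3 - p) / 2))
        * (‖s‖ ^ 2 + Q ^ 2 + ‖t‖ ^ 2) ^ (-((3 - p) / 2)) := by
    rw [← mul_rpow (by positivity) (by positivity)]
    exact rpow_le_rpow_of_nonpos (by positivity) (mul_le_bracketEnergy hm s t K Q) (by linarith)
  have hX := bracketEnergy_pos hm hQ s t K
  calc ellm m s K Q ^ p / ellm m t K Q ^ (p + 1) * Dker m s t K Q
      ≤ (m * (m + 2) / (m + 1) ^ 2) ^ (-(3 / 2) : ℝ)
        * (ellm m t K Q ^ (-p) * bracketEnergy m s t K Q ^ (-((3 - p) / 2))) :=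
        ellm_rpow_div_rpow_mul_Dker_le hm hp hQ s t K
    _ ≤ (m * (m + 2) / (m + 1) ^ 2) ^ (-(3 / 2) : ℝ)
        * ((m / (m + 1)) ^ (-(p / 2)) * u ^ (-(p / 2))
          * ((m * (m + 2) / (2 + 4 * m + m ^ 2)) ^ (-((3 - p) / 2))
            * (‖s‖ ^ 2 + Q ^ 2 + ‖t‖ ^ 2) ^ (-((3 - p) / 2)))) := by gcongr
    _ = _ := by
        rw [kernelConst]
        ring

/-- The weight `x^{(β-1)/2} / y^{(β+1)/2} + y^{(β-1)/2} / x^{(β+1)/2}`, which enters `Λ_β(m)` at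
`x = ℓ_m(s,K,Q)` and `y = ℓ_m(t,K,Q)`. -/
def symWeight (β x y : ℝ) : ℝ :=
  x ^ ((β - 1) / 2) / y ^ ((β + 1) / 2) + y ^ ((β - 1) / 2) / x ^ ((β + 1) / 2)

lemma symWeight_eq_cosh {x y : ℝ} (hx : 0 < x) (hy : 0 < y) (β : ℝ) :
    symWeight β x y = 2 * (x * y) ^ (-(1 / 2) : ℝ) * cosh (β * ((log x - log y) / 2)) := by
  have hcosh : 2 * (x * y) ^ (-(1 / 2) : ℝ) * cosh (β * ((log x - log y) / 2))
      = (x * y) ^ (-(1 / 2) : ℝ) * exp (β * ((log x - log y) / 2))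
        + (x * y) ^ (-(1 / 2) : ℝ) * exp (-(β * ((log x - log y) / 2))) := by
    rw [cosh_eq]
    ring
  rw [hcosh, symWeight, mul_rpow hx.le hy.le]
  simp only [rpow_def_of_pos hx, rpow_def_of_pos hy, ← exp_sub, ← exp_add]
  congr 2 <;> ring

lemma symWeight_le_symWeight {x y b b' : ℝ} (hx : 0 < x) (hy : 0 < y) (h : |b| ≤ |b'|) :
    symWeight b x y ≤ symWeight b' x y := by
  rw [symWeight_eq_cosh hx hy, symWeight_eq_cosh hx hy]
  gcongr
  rw [cosh_le_cosh, abs_mul, abs_mul]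
  gcongr

lemma Lamb_le_Lamb {m b b' : ℝ} (hm : 0 < m) (h : |b| ≤ |b'|) : Lamb m b ≤ Lamb m b' := by
  refine iSup_mono fun s => iSup_mono fun K => iSup_mono fun Q => iSup_mono fun hQ => ?_
  refine mul_le_mul_right (lintegral_mono fun t => ENNReal.ofReal_le_ofReal ?_) _
  refine mul_le_mul_of_nonneg_right (mul_le_mul_of_nonneg_left ?_ (by positivity))
    (Dker_nonneg hm hQ s t K)
  exact symWeight_le_symWeight (ellm_pos hm hQ s K) (ellm_pos hm hQ t K) h

lemma symWeight_mul_Dker_le {m p Q : ℝ} (hm : 0 < m) (hp : 0 ≤ p) (hp3 : p ≤ 3) (hQ : 0 < Q)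
    (s K : R3) {t : R3} (ht : t ≠ 0) :
    symWeight (2 * p + 1) (ellm m s K Q) (ellm m t K Q) * Dker m s t K Q
      ≤ kernelConst m p * radialMajorant p (‖s‖ ^ 2 + Q ^ 2) t := by
  have ht0 : 0 < ‖t‖ := norm_pos_iff.2 ht
  have hst := ellm_rpow_div_rpow_mul_Dker_le_kernelConst_mul hm hp hp3 (pow_pos ht0 2) hQ
    (s := s) ((mul_le_mul_of_nonneg_left (le_add_of_nonneg_right (sq_nonneg Q))
      (by positivity)).trans (le_ellm_sq hm.le t K Q))
  have hts := ellm_rpow_div_rpow_mul_Dker_le_kernelConst_mul hm hp hp3 (by positivity) hQ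
    (s := t) (le_ellm_sq hm.le s K Q)
  rw [← rpow_natCast_mul ht0.le, show ((2 : ℕ) : ℝ) * -(p / 2) = -p by push_cast; ring] at hst
  rw [Dker_comm, show ‖t‖ ^ 2 + Q ^ 2 + ‖s‖ ^ 2 = ‖s‖ ^ 2 + Q ^ 2 + ‖t‖ ^ 2 by ring] at hts
  rw [symWeight, show (2 * p + 1 - 1) / 2 = p by ring, show (2 * p + 1 + 1) / 2 = p + 1 by ring,
    add_mul, radialMajorant, add_comm (_ ^ (-(p / 2))), add_mul, mul_add]
  exact add_le_add hst hts

/-- The factor of the upper bound of `Λ_β(m)` which does not depend on `m`. -/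
def gammaFactor (β : ℝ) : ℝ :=
  2 / (3 - β) + √π / 2 * Gamma ((5 - β) / 4) / Gamma ((7 - β) / 4)

/-- The upper bound of `Λ_β(m)` for `1 ≤ β < 3`. -/
def lambBound (m β : ℝ) : ℝ :=
  4 / π * (m + 1) ^ ((β + 7) / 4) * (2 + 4 * m + m ^ 2) ^ ((7 - β) / 4)
    / (m ^ 3 * (2 + m) ^ ((13 - β) / 4)) * gammaFactor β

lemma gammaFactor_nonneg {β : ℝ} (hβ : β < 3) : 0 ≤ gammaFactor β := by
  have hΓ₅ : 0 < Gamma ((5 - β) / 4) := Gamma_pos_of_pos (by linarith)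
  have hΓ₇ : 0 < Gamma ((7 - β) / 4) := Gamma_pos_of_pos (by linarith)
  have : 0 < 3 - β := by linarith
  rw [gammaFactor]
  positivity

lemma kernelConst_eq {m : ℝ} (hm : 0 < m) (β : ℝ) :
    kernelConst m ((β - 1) / 2) = (1 + m) * ((m + 1) ^ ((β + 7) / 4)
      * (2 + 4 * m + m ^ 2) ^ ((7 - β) / 4) / (m ^ 3 * (2 + m) ^ ((13 - β) / 4))) := by
  rw [kernelConst, add_comm 1 m, add_comm 2 m]
  -- Both sides are positive products of powers, so it suffices to compare logarithms.
  refine log_injOn_pos (Set.mem_Ioi.2 (by positivity)) (Set.mem_Ioi.2 (by positivity)) ?_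
  simp (disch := positivity) only [log_mul, log_div, log_rpow, log_pow]
  push_cast
  ring

lemma Lamb_le_lambBound {m β : ℝ} (hm : 0 < m) (h1 : 1 ≤ β) (h3 : β < 3) :
    Lamb m β ≤ ENNReal.ofReal (lambBound m β) := by
  refine iSup_le fun s => iSup_le fun K => iSup_le fun Q => iSup_le fun hQ => ?_
  have hw : 0 < ‖s‖ ^ 2 + Q ^ 2 := by positivity
  have hC := kernelConst_nonneg hm.le ((β - 1) / 2)
  have hint (t : R3) : 1 / ‖t‖ ^ 2 * symWeight β (ellm m s K Q) (ellm m t K Q) * Dker m s t K Q ≤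
      kernelConst m ((β - 1) / 2) *
        (1 / ‖t‖ ^ 2 * radialMajorant ((β - 1) / 2) (‖s‖ ^ 2 + Q ^ 2) t) := by
    rcases eq_or_ne t 0 with rfl | ht
    · simp
    · have h := symWeight_mul_Dker_le (p := (β - 1) / 2) hm (by linarith) (by linarith) hQ s K ht
      rw [show 2 * ((β - 1) / 2) + 1 = β by ring] at h
      rw [mul_assoc, mul_left_comm (kernelConst _ _)]
      exact mul_le_mul_of_nonneg_left h (by positivity)
  calc _ ≤ ENNReal.ofReal ((‖s‖ ^ 2 + Q ^ 2) / (π ^ 2 * (1 + m))) * ∫⁻ t : R3, ENNReal.ofReal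
        (kernelConst m ((β - 1) / 2) *
          (1 / ‖t‖ ^ 2 * radialMajorant ((β - 1) / 2) (‖s‖ ^ 2 + Q ^ 2) t)) :=
        mul_le_mul_right (lintegral_mono fun t => ENNReal.ofReal_le_ofReal (hint t)) _
    _ = ENNReal.ofReal (lambBound m β) := by
        simp only [ENNReal.ofReal_mul hC]
        rw [lintegral_const_mul' _ _ ENNReal.ofReal_ne_top,
          lintegral_radialMajorant (by linarith) (by linarith) hw, ← ENNReal.ofReal_mul hC,
          ← ENNReal.ofReal_mul (by positivity), kernelConst_eq hm,
          show 1 / (1 - (β - 1) / 2) = 2 / (3 - β) by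
            rw [div_eq_div_iff (by linarith) (by linarith)]; ring,
          show 1 - (β - 1) / 2 / 2 = (5 - β) / 4 by ring,
          show (3 - (β - 1) / 2) / 2 = (7 - β) / 4 by ring, ← gammaFactor, lambBound]
        congr 1
        field_simp

-- In total the exponents of `m` add up to `-1`.
lemma lambBound_le {m β : ℝ} (hm : 2 ≤ m) (h1 : -7 ≤ β) (h3 : β < 3) :
    lambBound m β
      ≤ 4 / π * (2 ^ ((β + 7) / 4) * 4 ^ ((7 - β) / 4)) * gammaFactor β * m⁻¹ := by
  have hm0 : 0 < m := by linarith
  have hG := gammaFactor_nonneg h3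
  have hpow : m ^ ((β + 7) / 4) * (m ^ 2) ^ ((7 - β) / 4) = m⁻¹ * (m ^ 3 * m ^ ((13 - β) / 4)) := by
    rw [← rpow_natCast m 2, ← rpow_natCast m 3, ← rpow_mul hm0.le, ← rpow_neg_one m,
      ← rpow_add hm0, ← rpow_add hm0, ← rpow_add hm0]
    congr 1
    push_cast
    ring
  calc lambBound m β ≤ 4 / π * (2 * m) ^ ((β + 7) / 4) * (4 * m ^ 2) ^ ((7 - β) / 4)
        / (m ^ 3 * m ^ ((13 - β) / 4)) * gammaFactor β := by
        rw [lambBound]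
        gcongr <;> nlinarith
    _ = 4 / π * (2 ^ ((β + 7) / 4) * 4 ^ ((7 - β) / 4)) * gammaFactor β *
        (m ^ ((β + 7) / 4) * (m ^ 2) ^ ((7 - β) / 4) / (m ^ 3 * m ^ ((13 - β) / 4))) := by
        rw [mul_rpow two_pos.le hm0.le, mul_rpow four_pos.le (sq_nonneg m)]
        ring
    _ = _ := by rw [hpow, mul_div_cancel_right₀ _ (by positivity)]

lemma tendsto_lambBound {β : ℝ} (h1 : -7 ≤ β) (h3 : β < 3) :
    Tendsto (fun m => ENNReal.ofReal (lambBound m β)) atTop (𝓝 0) := by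
  have hlim := ENNReal.tendsto_ofReal <| (tendsto_inv_atTop_zero (𝕜 := ℝ)).const_mul
    (4 / π * (2 ^ ((β + 7) / 4) * 4 ^ ((7 - β) / 4)) * gammaFactor β)
  rw [mul_zero, ENNReal.ofReal_zero] at hlim
  refine tendsto_of_tendsto_of_tendsto_of_le_of_le' tendsto_const_nhds hlim
    (Eventually.of_forall fun _ => zero_le) ?_
  filter_upwards [eventually_ge_atTop 2] with m hm
  exact ENNReal.ofReal_le_ofReal (lambBound_le hm h1 h3)

lemma Lamb_le_lambBound_max {m β : ℝ} (hm : 0 < m) (hβ : |β| < 3) :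
    Lamb m β ≤ ENNReal.ofReal (lambBound m (max |β| 1)) :=
  (Lamb_le_Lamb hm ((le_max_left _ _).trans (le_abs_self _))).trans
    (Lamb_le_lambBound hm (le_max_right _ _) (max_lt hβ (by norm_num)))

theorem Lamb_upper_bound_large_beta_general :
    (∀ m β : ℝ, 0 < m → 1 ≤ β → β < 3 → Lamb m β ≤ ENNReal.ofReal (lambBound m β)) ∧
    (∀ m β : ℝ, 0 < m → |β| < 3 → Lamb m β ≠ ⊤) ∧
    (∀ β : ℝ, |β| < 3 → Tendsto (fun m => Lamb m β) atTop (𝓝 0)) := by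
  refine ⟨fun m β => Lamb_le_lambBound, fun m β hm hβ =>
    ne_top_of_le_ne_top ENNReal.ofReal_ne_top (Lamb_le_lambBound_max hm hβ), fun β hβ => ?_⟩
  have hβ1 : 1 ≤ max |β| 1 := le_max_right _ _
  refine tendsto_of_tendsto_of_tendsto_of_le_of_le' tendsto_const_nhds
    (tendsto_lambBound (by linarith) (max_lt hβ (by norm_num)))
    (Eventually.of_forall fun _ => zero_le) ?_
  filter_upwards [eventually_gt_atTop 0] with m hm using Lamb_le_lambBound_max hm hβ

/-- for `m > 0` and `1 < β < 3`, the explicit Gamma-function upper bound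
on `Λ_β(m)`; in particular `Λ_β(m)` is finite for `0 ≤ β < 3` and tends to `0` as
`m → ∞` for every fixed `0 ≤ β < 3`. -/
theorem Lamb_upper_bound_large_beta :
    (∀ m β : ℝ, 0 < m → 1 < β → β < 3 →
      Lamb m β ≤ ENNReal.ofReal ((4 / π) * (m + 1) ^ ((β + 7) / 4)
        * (2 + 4 * m + m ^ 2) ^ ((7 - β) / 4) / (m ^ 3 * (2 + m) ^ ((13 - β) / 4))
        * (2 / (3 - β) + (Real.sqrt π / 2) * Real.Gamma ((5 - β) / 4)
            / Real.Gamma ((7 - β) / 4)))) ∧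
    (∀ m β : ℝ, 0 < m → 0 ≤ β → β < 3 → Lamb m β ≠ ⊤) ∧
    (∀ β : ℝ, 0 ≤ β → β < 3 →
      Filter.Tendsto (fun m : ℝ => Lamb m β) Filter.atTop (nhds 0)) := by
  obtain ⟨hle, hfin, hlim⟩ := Lamb_upper_bound_large_beta_general
  exact ⟨fun m β hm h1 => hle m β hm h1.le,
    fun m β hm h0 h3 => hfin m β hm (by rwa [abs_of_nonneg h0]),
    fun β h0 h3 => hlim β (by rwa [abs_of_nonneg h0])⟩
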